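/- arXiv:1308.6188 — 2 statements merged into one kernel-verified Lean document; each statement's English description precedes it below -/
import Mathlib

section
/- Let p < q and let u : ℝ → ℝ be four times continuously differentiable on [p,q] with u(p) = u''(p) = u''(q) = u'''(q) = 0 and u not identically zero on [p,q]. Then ∫_p^q (u''''(x) + u(x)) u(x) dx = ∫_p^q u''(x)² dx + ∫_p^q u(x)² dx > 0. -/
open Set

/-!
Green's second identity says that `∫ (f'' g - f g'')` equals the boundary term `[f' g - f g']`,
because the cross terms `f' g'` cancel in the derivative of `f' g - f g'`. For `f = u''` and `g = u`
it turns `∫ u'''' u` into `∫ (u'')²`, since the boundary conditions annihilate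
`[u''' u - u'' u']`. Adding `∫ u²`, which is positive by continuity, gives the claim.
-/

section

open MeasureTheory
open scoped Interval RealInnerProductSpace

section Bilinear

variable {𝕜 E F G : Type*} [NontriviallyNormedField 𝕜]
  [NormedAddCommGroup E] [NormedAddCommGroup F] [NormedAddCommGroup G]
  [NormedSpace 𝕜 E] [NormedSpace 𝕜 F] [NormedSpace 𝕜 G]
  {μ : Measure ℝ} {a b : ℝ} {f : ℝ → E} {g : ℝ → F}

theorem intervalIntegrable_bilinear_of_continuousOn_right (B : E →L[𝕜] F →L[𝕜] G)
    (hf : IntervalIntegrable f μ a b) (hg : ContinuousOn g [[a, b]]) :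
    IntervalIntegrable (fun x ↦ B (f x) (g x)) μ a b := by
  rw [intervalIntegrable_iff] at hf ⊢
  obtain ⟨C, hC⟩ := isCompact_uIcc.exists_bound_of_continuousOn hg
  exact B.integrable_of_bilin_of_bdd_right C hf
    ((hg.mono uIoc_subset_uIcc).aestronglyMeasurable measurableSet_uIoc)
    (ae_restrict_of_forall_mem measurableSet_uIoc fun x hx ↦ hC x (uIoc_subset_uIcc hx))

theorem intervalIntegrable_bilinear_of_continuousOn_left (B : E →L[𝕜] F →L[𝕜] G)
    (hf : ContinuousOn f [[a, b]]) (hg : IntervalIntegrable g μ a b) :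
    IntervalIntegrable (fun x ↦ B (f x) (g x)) μ a b :=
  intervalIntegrable_bilinear_of_continuousOn_right B.flip hg hf

end Bilinear

theorem integral_bilinear_deriv_two_sub_eq {E F G : Type*}
    [NormedAddCommGroup E] [NormedAddCommGroup F] [NormedAddCommGroup G]
    [NormedSpace ℝ E] [NormedSpace ℝ F] [NormedSpace ℝ G] [CompleteSpace G]
    (B : E →L[ℝ] F →L[ℝ] G) {a b : ℝ} {f f' f'' : ℝ → E} {g g' g'' : ℝ → F}
    (hf : ∀ x ∈ [[a, b]], HasDerivWithinAt f (f' x) [[a, b]] x)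
    (hf' : ∀ x ∈ [[a, b]], HasDerivWithinAt f' (f'' x) [[a, b]] x)
    (hg : ∀ x ∈ [[a, b]], HasDerivWithinAt g (g' x) [[a, b]] x)
    (hg' : ∀ x ∈ [[a, b]], HasDerivWithinAt g' (g'' x) [[a, b]] x)
    (hf'' : IntervalIntegrable f'' volume a b) (hg'' : IntervalIntegrable g'' volume a b) :
    ∫ x in a..b, (B (f'' x) (g x) - B (f x) (g'' x)) =
      (B (f' b) (g b) - B (f b) (g' b)) - (B (f' a) (g a) - B (f a) (g' a)) := by
  have hderiv : ∀ x ∈ [[a, b]], HasDerivWithinAt (fun x ↦ B (f' x) (g x) - B (f x) (g' x))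
      (B (f'' x) (g x) - B (f x) (g'' x)) [[a, b]] x := fun x hx ↦
    ((B.hasDerivWithinAt_of_bilinear (hf' x hx) (hg x hx)).sub
      (B.hasDerivWithinAt_of_bilinear (hf x hx) (hg' x hx))).congr_deriv (by abel)
  refine intervalIntegral.integral_eq_sub_of_hasDeriv_right (HasDerivWithinAt.continuousOn hderiv)
    (fun x hx ↦ ?_) ?_
  · exact ((hderiv x (mem_Icc_of_Ioo hx)).hasDerivAt (Icc_mem_nhds hx.1 hx.2)).hasDerivWithinAt
  · exact (intervalIntegrable_bilinear_of_continuousOn_right B hf''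
      (HasDerivWithinAt.continuousOn hg)).sub
        (intervalIntegrable_bilinear_of_continuousOn_left B (HasDerivWithinAt.continuousOn hf) hg'')

section InnerProductSpace

variable {E : Type*} [NormedAddCommGroup E] [InnerProductSpace ℝ E] {u u₁ u₂ u₃ u₄ : ℝ → E}

theorem integral_inner_deriv_four_self_eq {a b : ℝ}
    (hu₁ : ∀ x ∈ [[a, b]], HasDerivWithinAt u (u₁ x) [[a, b]] x)
    (hu₂ : ∀ x ∈ [[a, b]], HasDerivWithinAt u₁ (u₂ x) [[a, b]] x)
    (hu₃ : ∀ x ∈ [[a, b]], HasDerivWithinAt u₂ (u₃ x) [[a, b]] x)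
    (hu₄ : ∀ x ∈ [[a, b]], HasDerivWithinAt u₃ (u₄ x) [[a, b]] x)
    (hu₄i : IntervalIntegrable u₄ volume a b) :
    ∫ x in a..b, ⟪u₄ x, u x⟫ =
      (⟪u₃ b, u b⟫ - ⟪u₂ b, u₁ b⟫) - (⟪u₃ a, u a⟫ - ⟪u₂ a, u₁ a⟫) +
        ∫ x in a..b, ‖u₂ x‖ ^ 2 := by
  have hu : ContinuousOn u [[a, b]] := HasDerivWithinAt.continuousOn hu₁
  have hu₂c : ContinuousOn u₂ [[a, b]] := HasDerivWithinAt.continuousOn hu₃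
  have hint : IntervalIntegrable (fun x ↦ ⟪u₄ x, u x⟫) volume a b :=
    intervalIntegrable_bilinear_of_continuousOn_right (innerSL ℝ) hu₄i hu
  have hint₂ : IntervalIntegrable (fun x ↦ ⟪u₂ x, u₂ x⟫) volume a b :=
    (hu₂c.inner hu₂c).intervalIntegrable
  have green : ∫ x in a..b, (⟪u₄ x, u x⟫ - ⟪u₂ x, u₂ x⟫) =
      (⟪u₃ b, u b⟫ - ⟪u₂ b, u₁ b⟫) - (⟪u₃ a, u a⟫ - ⟪u₂ a, u₁ a⟫) :=
    integral_bilinear_deriv_two_sub_eq (innerSL ℝ) hu₃ hu₄ hu₁ hu₂ hu₄i hu₂c.intervalIntegrable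
  simp only [← green, ← real_inner_self_eq_norm_sq, intervalIntegral.integral_sub hint hint₂,
    sub_add_cancel]

theorem fourth_order_operator_positive_general {p q : ℝ} (hpq : p < q)
    (hu₁ : ∀ x ∈ Icc p q, HasDerivWithinAt u (u₁ x) (Icc p q) x)
    (hu₂ : ∀ x ∈ Icc p q, HasDerivWithinAt u₁ (u₂ x) (Icc p q) x)
    (hu₃ : ∀ x ∈ Icc p q, HasDerivWithinAt u₂ (u₃ x) (Icc p q) x)
    (hu₄ : ∀ x ∈ Icc p q, HasDerivWithinAt u₃ (u₄ x) (Icc p q) x)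
    (hu₄i : IntervalIntegrable u₄ volume p q)
    (hubc : ⟪u₃ p, u p⟫ - ⟪u₂ p, u₁ p⟫ = ⟪u₃ q, u q⟫ - ⟪u₂ q, u₁ q⟫)
    (hnontriv : ∃ x ∈ Icc p q, u x ≠ 0) :
    (∫ x in p..q, ⟪u₄ x + u x, u x⟫) =
        (∫ x in p..q, ‖u₂ x‖ ^ 2) + ∫ x in p..q, ‖u x‖ ^ 2 ∧
    0 < ∫ x in p..q, ⟪u₄ x + u x, u x⟫ := by
  have hu : ContinuousOn u (Icc p q) := HasDerivWithinAt.continuousOn hu₁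
  have u_sq_pos : 0 < ∫ x in p..q, ‖u x‖ ^ 2 :=
    intervalIntegral.integral_pos hpq (hu.norm.pow 2) (fun x _ ↦ sq_nonneg _)
      (hnontriv.imp fun x hx ↦ ⟨hx.1, pow_pos (norm_pos_iff.2 hx.2) 2⟩)
  have u₂_sq_nonneg : 0 ≤ ∫ x in p..q, ‖u₂ x‖ ^ 2 :=
    intervalIntegral.integral_nonneg hpq.le fun x _ ↦ sq_nonneg _
  rw [← uIcc_of_le hpq.le] at hu hu₁ hu₂ hu₃ hu₄
  have identity : (∫ x in p..q, ⟪u₄ x + u x, u x⟫) =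
      (∫ x in p..q, ‖u₂ x‖ ^ 2) + ∫ x in p..q, ‖u x‖ ^ 2 := by
    have hint : IntervalIntegrable (fun x ↦ ⟪u₄ x, u x⟫) volume p q :=
      intervalIntegrable_bilinear_of_continuousOn_right (innerSL ℝ) hu₄i hu
    have hint₀ : IntervalIntegrable (fun x ↦ ‖u x‖ ^ 2) volume p q :=
      (hu.norm.pow 2).intervalIntegrable
    simp only [inner_add_left, real_inner_self_eq_norm_sq]
    rw [intervalIntegral.integral_add hint hint₀,
      integral_inner_deriv_four_self_eq hu₁ hu₂ hu₃ hu₄ hu₄i, hubc, sub_self, zero_add]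
  exact ⟨identity, identity ▸ add_pos_of_nonneg_of_pos u₂_sq_nonneg u_sq_pos⟩

end InnerProductSpace

end

/-- **Strict positivity of the fourth-order operator `L⁴ : u ↦ u'''' + u` (Lemma 4).**
If `u` is four times continuously differentiable on `[p,q]` (with successive derivatives
`u₁, u₂, u₃, u₄`), satisfies `u p = u'' p = u'' q = u''' q = 0`, and is not identically zero
on `[p,q]`, then `∫_p^q (u'''' + u) u = ∫_p^q (u'')² + ∫_p^q u² > 0`. -/
theorem fourth_order_operator_positive
    (p q : ℝ) (hpq : p < q)
    (u u₁ u₂ u₃ u₄ : ℝ → ℝ)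
    (hu₁ : ∀ x ∈ Icc p q, HasDerivAt u (u₁ x) x)
    (hu₂ : ∀ x ∈ Icc p q, HasDerivAt u₁ (u₂ x) x)
    (hu₃ : ∀ x ∈ Icc p q, HasDerivAt u₂ (u₃ x) x)
    (hu₄ : ∀ x ∈ Icc p q, HasDerivAt u₃ (u₄ x) x)
    (hu₄c : ContinuousOn u₄ (Icc p q))
    (hubc : u p = 0 ∧ u₂ p = 0 ∧ u₂ q = 0 ∧ u₃ q = 0)
    (hnontriv : ∃ x ∈ Icc p q, u x ≠ 0) :
    (∫ x in p..q, (u₄ x + u x) * u x) =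
        (∫ x in p..q, (u₂ x)^2) + ∫ x in p..q, (u x)^2 ∧
    0 < ∫ x in p..q, (u₄ x + u x) * u x := by
  obtain ⟨hup, hu₂p, hu₂q, hu₃q⟩ := hubc
  simpa [mul_comm] using fourth_order_operator_positive_general hpq
    (fun x hx ↦ (hu₁ x hx).hasDerivWithinAt) (fun x hx ↦ (hu₂ x hx).hasDerivWithinAt)
    (fun x hx ↦ (hu₃ x hx).hasDerivWithinAt) (fun x hx ↦ (hu₄ x hx).hasDerivWithinAt)
    (hu₄c.intervalIntegrable_of_Icc hpq.le) (by simp [hup, hu₂p, hu₂q, hu₃q]) hnontriv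
end

section
/- Let X and Y be complex Hilbert spaces, let B, B^δ : X → Y be bounded linear operators, z ∈ X, δ > 0, C̃ ≥ 0, and y^δ ∈ Y with ‖y^δ − B z‖ ≤ δ and operator norm ‖B − B^δ‖ ≤ C̃ δ. Set α = δ² and let z_α^δ = ((B^δ)* B^δ + α·id)^{-1} (B^δ)* y^δ. Then ‖B z_α^δ − B z‖ ≤ C δ, where C = C̃·((1 + C̃‖z‖)/2 + ‖z‖) + (1 + C̃‖z‖) + ‖z‖. -/
open ContinuousLinearMap

/-!
Let `T` be the perturbed operator, `y` the perturbed data, `x` the exact solution, `u` the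
regularized solution and `e = u - x` its error. Testing the normal equation with `e` itself gives
`‖T e‖² + α ‖e‖² = re ⟪T e, y - T x⟫ - α re ⟪e, x⟫`. By Cauchy–Schwarz the pair
`(‖T e‖, √α ‖e‖)` lies in a disc through the origin whose center is half of
`(‖y - T x‖, √α ‖x‖)`. Bounding the two coordinates over this disc replaces the spectral estimates
of the filter functions. Exchanging `T` for the exact operator then costs its error times `‖e‖`.
-/

section TikhonovRegularization

lemma le_add_half_of_sq_add_sq_le {a b p q : ℝ} (hp : 0 ≤ p) (hq : 0 ≤ q)
    (h : a ^ 2 + b ^ 2 ≤ p * a + q * b) : a ≤ p + q / 2 := by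
  have hdisc : a * (a - p) ≤ (q / 2) ^ 2 := by linarith [sq_nonneg (b - q / 2)]
  by_contra! ha
  have hlt : q / 2 * (q / 2) < a * (a - p) :=
    mul_lt_mul'' (by linarith) (by linarith) (by positivity) (by positivity)
  linarith

variable {𝕜 X Y : Type*} [RCLike 𝕜] [SeminormedAddCommGroup X] [InnerProductSpace 𝕜 X]
  [SeminormedAddCommGroup Y] [InnerProductSpace 𝕜 Y]

/-- `u` is the Tikhonov regularized solution of `T x = y` with regularization parameter `α`. The
normal equation `(T* T + α) u = T* y` is encoded in its variational form, which needs neither an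
adjoint of `T` nor completeness of the spaces. -/
def IsTikhonovSolution (T : X →ₗ[𝕜] Y) (α : ℝ) (y : Y) (u : X) : Prop :=
  ∀ v, inner 𝕜 (T v) (T u) + (α : 𝕜) * inner 𝕜 v u = inner 𝕜 (T v) y

lemma isTikhonovSolution_iff_normalEquation {E F : Type*}
    [NormedAddCommGroup E] [InnerProductSpace 𝕜 E] [CompleteSpace E]
    [NormedAddCommGroup F] [InnerProductSpace 𝕜 F] [CompleteSpace F]
    {T : E →L[𝕜] F} {α : ℝ} {y : F} {u : E} :
    IsTikhonovSolution (T : E →ₗ[𝕜] F) α y u ↔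
      ((adjoint T).comp T + (α : 𝕜) • (1 : E →L[𝕜] E)) u = adjoint T y := by
  rw [ext_iff_inner_left 𝕜]
  simp only [IsTikhonovSolution, coe_coe, add_apply, comp_apply, smul_apply,
    one_apply_eq_self, inner_add_right, inner_smul_right, adjoint_inner_right]

namespace IsTikhonovSolution

variable {T : X →ₗ[𝕜] Y} {α : ℝ} {y : Y} {u : X}

lemma inner_map_sub_add_mul_inner_sub (hu : IsTikhonovSolution T α y u) (v x : X) :
    inner 𝕜 (T v) (T (u - x)) + (α : 𝕜) * inner 𝕜 v (u - x) =
      inner 𝕜 (T v) (y - T x) - (α : 𝕜) * inner 𝕜 v x := by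
  simp only [map_sub, inner_sub_right]
  linear_combination hu v

lemma norm_map_sub_sq_add_mul_norm_sub_sq_le (hu : IsTikhonovSolution T α y u) (hα : 0 ≤ α)
    (x : X) :
    ‖T (u - x)‖ ^ 2 + α * ‖u - x‖ ^ 2 ≤ ‖T (u - x)‖ * ‖y - T x‖ + α * (‖u - x‖ * ‖x‖) := by
  have hre := congrArg RCLike.re (hu.inner_map_sub_add_mul_inner_sub (u - x) x)
  simp only [map_add, map_sub (RCLike.re : 𝕜 →+ ℝ), RCLike.re_ofReal_mul,
    inner_self_eq_norm_sq] at hre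
  have hdata := re_inner_le_norm (𝕜 := 𝕜) (T (u - x)) (y - T x)
  have hprior : -RCLike.re (inner 𝕜 (u - x) x) ≤ ‖u - x‖ * ‖x‖ :=
    (neg_le_abs _).trans ((RCLike.abs_re_le_norm _).trans (norm_inner_le_norm _ _))
  linarith [mul_le_mul_of_nonneg_left hprior hα]

lemma norm_map_sub_sq_add_sqrt_mul_norm_sub_sq_le (hu : IsTikhonovSolution T α y u) (hα : 0 ≤ α)
    (x : X) :
    ‖T (u - x)‖ ^ 2 + (√α * ‖u - x‖) ^ 2 ≤
      ‖y - T x‖ * ‖T (u - x)‖ + √α * ‖x‖ * (√α * ‖u - x‖) := by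
  have henergy := hu.norm_map_sub_sq_add_mul_norm_sub_sq_le hα x
  linear_combination henergy + (‖u - x‖ ^ 2 - ‖u - x‖ * ‖x‖) * Real.sq_sqrt hα

lemma norm_map_sub_le (hu : IsTikhonovSolution T α y u) (hα : 0 ≤ α) (x : X) :
    ‖T (u - x)‖ ≤ ‖y - T x‖ + √α * ‖x‖ / 2 :=
  le_add_half_of_sq_add_sq_le (norm_nonneg _) (by positivity)
    (hu.norm_map_sub_sq_add_sqrt_mul_norm_sub_sq_le hα x)

lemma norm_sub_le (hu : IsTikhonovSolution T α y u) (hα : 0 < α) (x : X) :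
    ‖u - x‖ ≤ ‖y - T x‖ / (2 * √α) + ‖x‖ := by
  have henergy := hu.norm_map_sub_sq_add_sqrt_mul_norm_sub_sq_le hα.le x
  have hscaled : √α * ‖u - x‖ ≤ √α * ‖x‖ + ‖y - T x‖ / 2 :=
    le_add_half_of_sq_add_sq_le (b := ‖T (u - x)‖) (by positivity) (norm_nonneg _) (by linarith)
  have hsqrt : 0 < √α := Real.sqrt_pos.2 hα
  calc
    ‖u - x‖ ≤ (√α * ‖x‖ + ‖y - T x‖ / 2) / √α := (le_div_iff₀' hsqrt).2 hscaled
    _ = ‖y - T x‖ / (2 * √α) + ‖x‖ := by field_simp; ring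

end IsTikhonovSolution

theorem tikhonov_perturbed_residual_rate_general {B Bδ : X →ₗ[𝕜] Y} {α δ η : ℝ} {yδ : Y}
    {z zαδ : X} (hα : 0 < α) (hη : 0 ≤ η) (hy : ‖yδ - B z‖ ≤ δ)
    (hop : ∀ x, ‖B x - Bδ x‖ ≤ η * ‖x‖) (hz : IsTikhonovSolution Bδ α yδ zαδ) :
    ‖B zαδ - B z‖ ≤
      η * ((δ + η * ‖z‖) / (2 * √α) + ‖z‖) + (δ + η * ‖z‖) + √α * ‖z‖ / 2 := by
  have hdata : ‖yδ - Bδ z‖ ≤ δ + η * ‖z‖ :=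
    (norm_sub_le_norm_sub_add_norm_sub yδ (B z) (Bδ z)).trans (add_le_add hy (hop z))
  have herror : ‖zαδ - z‖ ≤ (δ + η * ‖z‖) / (2 * √α) + ‖z‖ :=
    (hz.norm_sub_le hα z).trans (by gcongr)
  calc
    ‖B zαδ - B z‖ = ‖(B (zαδ - z) - Bδ (zαδ - z)) + Bδ (zαδ - z)‖ := by
      rw [sub_add_cancel, map_sub]
    _ ≤ η * ‖zαδ - z‖ + (‖yδ - Bδ z‖ + √α * ‖z‖ / 2) :=
      norm_add_le_of_le (hop _) (hz.norm_map_sub_le hα.le z)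
    _ ≤ η * ((δ + η * ‖z‖) / (2 * √α) + ‖z‖) + ((δ + η * ‖z‖) + √α * ‖z‖ / 2) := by gcongr
    _ = _ := (add_assoc _ _ _).symm

end TikhonovRegularization

/-- **Residual convergence rate of Tikhonov regularization with perturbed operator and data
(second assertion of Lemma 8).** If `‖yδ − Bz‖ ≤ δ`, `‖B − Bδ‖ ≤ C̃δ`, `α = δ²`, and
`zαδ = ((Bδ)*Bδ + α·id)⁻¹ (Bδ)* yδ`, then `‖B zαδ − B z‖ ≤ C δ` with
`C = C̃((1 + C̃‖z‖)/2 + ‖z‖) + (1 + C̃‖z‖) + ‖z‖`. -/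
theorem tikhonov_perturbed_residual_rate
    (X Y : Type*) [NormedAddCommGroup X] [InnerProductSpace ℂ X] [CompleteSpace X]
    [NormedAddCommGroup Y] [InnerProductSpace ℂ Y] [CompleteSpace Y]
    (B Bδ : X →L[ℂ] Y) (z : X) (δ : ℝ) (hδ : 0 < δ) (Ctilde : ℝ) (hC : 0 ≤ Ctilde)
    (yδ : Y) (hy : ‖yδ - B z‖ ≤ δ) (hop : ‖B - Bδ‖ ≤ Ctilde * δ)
    (zαδ : X)
    (hz : ((adjoint Bδ).comp Bδ + ((δ^2 : ℝ) : ℂ) • (1 : X →L[ℂ] X)) zαδ =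
      adjoint Bδ yδ) :
    ‖B zαδ - B z‖ ≤
      (Ctilde * ((1 + Ctilde * ‖z‖) / 2 + ‖z‖) + (1 + Ctilde * ‖z‖) + ‖z‖) * δ := by
  have hbound := tikhonov_perturbed_residual_rate_general (pow_pos hδ 2) (mul_nonneg hC hδ.le) hy
    ((B - Bδ).le_of_opNorm_le hop) (isTikhonovSolution_iff_normalEquation.2 hz)
  have hscale : (δ + Ctilde * δ * ‖z‖) / (2 * δ) = (1 + Ctilde * ‖z‖) / 2 := by field_simp
  rw [Real.sqrt_sq hδ.le, hscale] at hbound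
  exact hbound.trans (by linarith [mul_nonneg hδ.le (norm_nonneg z)])
end
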